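/- Let 0 ≤ α < ω₁, let X = [0,1] × ∏_{t∈(0,1]} X_t where X_t = ℕ with the discrete topology for every t ∈ (0,1], for i ∈ {1,2} let F_i = {y = (y_t)_{t∈(0,1]} ∈ ℕ^{(0,1]} : for every n ∈ ℕ with n ≠ i, the set {t ∈ (0,1] : y_t = n} has at most one element}, let A₁ ⊆ [0,1] be a set of the functionally additive class α in [0,1] which is not of the functionally multiplicative class α in [0,1], and let A₂ = [0,1]∖A₁. Then the set E = (A₁ × F₁) ∪ (A₂ × F₂) is not α-embedded in X. -/

import Mathlib

/-!
Since `(0,1]` is uncountable, no `y` takes every value at most once, so `F₁` and `F₂` are disjoint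
closed sets. Hence `A₁ × F₁` is clopen in `E`, and has every multiplicative class there.

On the other hand, a continuous real function on a product of separable spaces depends on countably
many coordinates, hence so does every set of a functional class. If `S` is such a countable set of
coordinates for `C ⊆ X`, take `y₁ ∈ F₁` and `y₂ ∈ F₂` which agree on `S`: equal and injective on
`S`, with `yᵢ` constantly `i` off `S`. The sections of `C` at `y₁` and `y₂` coincide. If `C` cuts
`A₁ × F₁` out of `E`, this common section is `A₁`, so `C` cannot have multiplicative class `α`.
-/

open Set Topology

/-- A topological space is pseudo-ℵ₁-compact if every locally finite family of
(pairwise distinct) nonempty open subsets is at most countable. -/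
def PseudoAleph1Compact (Z : Type*) [TopologicalSpace Z] : Prop :=
  ∀ 𝒰 : Set (Set Z), (∀ U ∈ 𝒰, IsOpen U) → (∀ U ∈ 𝒰, U.Nonempty) →
    LocallyFinite (fun U : 𝒰 => (U : Set Z)) → 𝒰.Countable

/-- `A` is functionally closed in `Z` if it is the zero set of a continuous real function. -/
def FunctionallyClosed {Z : Type*} [TopologicalSpace Z] (A : Set Z) : Prop :=
  ∃ f : Z → ℝ, Continuous f ∧ A = f ⁻¹' {0}

/-- `A` is functionally open in `Z` if its complement is functionally closed. -/
def FunctionallyOpen {Z : Type*} [TopologicalSpace Z] (A : Set Z) : Prop :=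
  FunctionallyClosed Aᶜ

/-- `FunClass Z true α A` : `A` is of the functionally additive class `α` in `Z`;
`FunClass Z false α A` : `A` is of the functionally multiplicative class `α` in `Z`. -/
inductive FunClass (Z : Type*) [TopologicalSpace Z] : Bool → Ordinal.{0} → Set Z → Prop
  | open_ (A : Set Z) (h : FunctionallyOpen A) : FunClass Z true 0 A
  | closed_ (A : Set Z) (h : FunctionallyClosed A) : FunClass Z false 0 A
  | union (α : Ordinal.{0}) (A : ℕ → Set Z) (β : ℕ → Ordinal.{0}) (hα : α ≠ 0)
      (hβ : ∀ n, β n < α) (h : ∀ n, FunClass Z false (β n) (A n)) :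
      FunClass Z true α (⋃ n, A n)
  | inter (α : Ordinal.{0}) (A : ℕ → Set Z) (β : ℕ → Ordinal.{0}) (hα : α ≠ 0)
      (hβ : ∀ n, β n < α) (h : ∀ n, FunClass Z true (β n) (A n)) :
      FunClass Z false α (⋂ n, A n)

/-- `A` is α-embedded in `Z` if every subset of `A` of functionally multiplicative class `α`
in the subspace `A` is the trace on `A` of a set of functionally multiplicative class `α` in `Z`. -/
def IsAlphaEmbedded {Z : Type*} [TopologicalSpace Z] (α : Ordinal.{0}) (A : Set Z) : Prop :=
  ∀ B : Set Z, B ⊆ A → FunClass ↥A false α (Subtype.val ⁻¹' B) →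
    ∃ C : Set Z, FunClass Z false α C ∧ C ∩ A = B

/-- `Z` is α-universal if every subset of `Z` is α-embedded in `Z`. -/
def AlphaUniversal (Z : Type*) [TopologicalSpace Z] (α : Ordinal.{0}) : Prop :=
  ∀ A : Set Z, IsAlphaEmbedded α A

/-- The projection of the product `∀ t, X t` onto the coordinates in `S`. -/
def proj {T : Type*} {X : T → Type*} (S : Set T) (x : ∀ t, X t) : ∀ t : S, X t.1 :=
  fun t => x t.1

/-- A functionally measurable (Baire) set: a member of some functionally additive or
multiplicative class `α` with `α < ω₁`. -/
def FunctionallyMeasurable {Z : Type*} [TopologicalSpace Z] (A : Set Z) : Prop :=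
  ∃ (b : Bool) (β : Ordinal.{0}), β < (Cardinal.aleph 1).ord ∧ FunClass Z b β A

/-- `Y` has a regular `Gδ`-diagonal. -/
def RegularGDeltaDiagonal (Y : Type*) [TopologicalSpace Y] : Prop :=
  ∃ G : ℕ → Set (Y × Y), (∀ n, IsOpen (G n)) ∧
    {p : Y × Y | p.1 = p.2} = ⋂ n, G n ∧
    {p : Y × Y | p.1 = p.2} = ⋂ n, closure (G n)

/-- The natural numbers `{1, 2, 3, ...}` with the discrete topology
(as a subspace of the discrete space `ℕ`). -/
abbrev PosNat : Type := {n : ℕ // 0 < n}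

/-- The product `Y = ℕ^{(0,1]}` where `ℕ = {1,2,...}` is discrete. -/
abbrev Yprod : Type := ↥(Set.Ioc (0 : ℝ) 1) → PosNat

/-- Stone's set `F i = {y ∈ Y : |{t : y t = n}| ≤ 1 for every n ≠ i}`. -/
def Fset (i : PosNat) : Set Yprod :=
  {y | ∀ n : PosNat, n ≠ i → {t : ↥(Set.Ioc (0 : ℝ) 1) | y t = n}.Subsingleton}

/-- The product `X = [0,1] × ℕ^{(0,1]}`. -/
abbrev Xprod : Type := ↥(Set.Icc (0 : ℝ) 1) × Yprod

section CountablyManyCoordinates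

open Metric TopologicalSpace

variable {ι E : Type*} {X : ι → Type*}

lemma exists_countable_forall_finset_subset (G : Finset ι → Set ι) (hG : ∀ R, (G R).Countable) :
    ∃ S : Set ι, S.Countable ∧ ∀ R : Finset ι, (R : Set ι) ⊆ S → G R ⊆ S := by
  let step (S : Set ι) : Set ι := S ∪ ⋃ R ∈ {R : Finset ι | (R : Set ι) ⊆ S}, G R
  let s (n : ℕ) : Set ι := step^[n] ∅
  have hs (n : ℕ) : s (n + 1) = step (s n) := Function.iterate_succ_apply' _ _ _
  have hmono : Monotone s := monotone_nat_of_le_succ fun n => by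
    rw [hs]
    exact subset_union_left
  have hcount (n : ℕ) : (s n).Countable := by
    induction n with
    | zero => exact countable_empty
    | succ n ih =>
      have hfin : {R : Finset ι | (R : Set ι) ⊆ s n}.Countable := by
        refine ((countable_ofPred_finite_subset ih).preimage Finset.coe_injective).mono ?_
        exact fun R hR => ⟨R.finite_toSet, hR⟩
      rw [hs]
      exact ih.union (hfin.biUnion fun R _ => hG R)
  refine ⟨⋃ n, s n, countable_iUnion hcount, fun R hR => ?_⟩
  obtain ⟨n, hn⟩ := hmono.directed_le.exists_mem_subset_of_finset_subset_biUnion hR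
  calc G R ⊆ ⋃ R ∈ {R : Finset ι | (R : Set ι) ⊆ s n}, G R := subset_biUnion_of_mem (u := G) hn
    _ ⊆ s (n + 1) := (hs n).symm ▸ subset_union_right
    _ ⊆ ⋃ n, s n := subset_iUnion s (n + 1)

variable [∀ t, TopologicalSpace (X t)]

lemma exists_countable_inter_pi_nonempty [∀ t, SeparableSpace (X t)] (R : Finset ι) :
    ∃ D : Set (∀ t, X t), D.Countable ∧ ∀ (y : ∀ t, X t) (U : ∀ t, Set (X t)),
      (∀ t ∈ R, U t ∈ 𝓝 (y t)) → (D ∩ (R : Set ι).pi U).Nonempty := by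
  rcases isEmpty_or_nonempty (∀ t, X t) with hX | ⟨⟨x⟩⟩
  · exact ⟨∅, countable_empty, fun y => isEmptyElim y⟩
  have (t : ι) : Nonempty (X t) := ⟨x t⟩
  have hsurj : Function.Surjective (R.restrict (π := X)) := Subtype.surjective_restrict _
  obtain ⟨Q, hQ, hQd⟩ := exists_countable_dense (∀ t : R, X t)
  refine ⟨Function.surjInv hsurj '' Q, hQ.image _, fun y U hU => ?_⟩
  obtain ⟨q, hqQ, hqU⟩ := hQd.inter_nhds_nonempty <|
    set_pi_mem_nhds (x := R.restrict y) finite_univ fun t _ => hU t t.2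
  have hq : R.restrict (Function.surjInv hsurj q) = q := Function.surjInv_eq hsurj q
  refine ⟨_, mem_image_of_mem _ hqQ, fun t ht => ?_⟩
  have := hqU ⟨t, ht⟩ trivial
  rwa [← hq] at this

variable [MetricSpace E] {g : (∀ t, X t) → E}

lemma exists_finset_mapsTo_pi_ball (hg : Continuous g) (y : ∀ t, X t) {ε : ℝ} (hε : 0 < ε) :
    ∃ (T : Finset ι) (U : ∀ t, Set (X t)), (∀ t, U t ∈ 𝓝 (y t)) ∧
      MapsTo g ((T : Set ι).pi U) (ball (g y) ε) := by
  have h : g ⁻¹' ball (g y) ε ∈ 𝓝 y := hg.continuousAt.preimage_mem_nhds (ball_mem_nhds _ hε)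
  rwa [nhds_pi, Filter.mem_pi'] at h

/-- The point which is `d` on `T'` and `w` elsewhere lies in both boxes. -/
lemma dist_lt_add_of_mapsTo_pi_ball {w d : ∀ t, X t} {T T' : Finset ι} {U V : ∀ t, Set (X t)}
    {ε δ : ℝ} (hU : ∀ t, U t ∈ 𝓝 (w t)) (hV : ∀ t, V t ∈ 𝓝 (d t))
    (hgU : MapsTo g ((T : Set ι).pi U) (ball (g w) ε))
    (hgV : MapsTo g ((T' : Set ι).pi V) (ball (g d) δ)) (hd : ∀ t ∈ T, t ∈ T' → d t ∈ U t) :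
    dist (g w) (g d) < ε + δ := by
  classical
  let z := T'.piecewise d w
  have hzU : z ∈ (T : Set ι).pi U := fun t ht => by
    by_cases htT' : t ∈ T'
    · simpa only [z, Finset.piecewise_eq_of_mem _ _ _ htT'] using hd t ht htT'
    · simpa only [z, Finset.piecewise_eq_of_notMem _ _ _ htT'] using mem_of_mem_nhds (hU t)
  have hzV : z ∈ (T' : Set ι).pi V := fun t ht => by
    simpa only [z, Finset.piecewise_eq_of_mem _ _ _ ht] using mem_of_mem_nhds (hV t)
  calc dist (g w) (g d) ≤ dist (g z) (g w) + dist (g z) (g d) := dist_triangle_left _ _ _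
    _ < ε + δ := add_lt_add (hgU hzU) (hgV hzV)

variable [∀ t, SeparableSpace (X t)]

/-- `S` is closed under passing from a finite `R ⊆ S` to the coordinates which control `g` near the
points of a countable set whose projection to `∏ t ∈ R, X t` is dense. Two points which agree on `S`
are then compared with a common point of such a set. -/
theorem exists_countable_dependsOn (hg : Continuous g) :
    ∃ S : Set ι, S.Countable ∧ DependsOn g S := by
  classical
  choose T U hU hgU using fun (y : ∀ t, X t) (k : ℕ) =>
    exists_finset_mapsTo_pi_ball hg y (Nat.one_div_pos_of_nat (α := ℝ) (n := k))
  choose D hD hDU using exists_countable_inter_pi_nonempty (X := X)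
  obtain ⟨S, hS, hclosed⟩ := exists_countable_forall_finset_subset
    (fun R => ⋃ d ∈ D R, ⋃ k, (T d k : Set ι))
    fun R => (hD R).biUnion fun d _ => countable_iUnion fun k => (T d k).countable_toSet
  refine ⟨S, hS, fun y y' hyy' => eq_of_forall_dist_le fun ε hε => ?_⟩
  obtain ⟨k, hk⟩ := exists_nat_one_div_lt (show 0 < ε / 4 by positivity)
  let R : Finset ι := {t ∈ T y k ∪ T y' k | t ∈ S}
  have hRS : ∀ t ∈ R, t ∈ S := fun t ht => (Finset.mem_filter.1 ht).2
  obtain ⟨d, hdD, hdU⟩ := hDU R y (fun t => U y k t ∩ U y' k t) fun t ht =>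
    Filter.inter_mem (hU y k t) (hyy' t (hRS t ht) ▸ hU y' k t)
  have hdS : ∀ t ∈ T d k, t ∈ S := fun t ht =>
    hclosed R hRS <| mem_biUnion hdD <| mem_iUnion_of_mem k ht
  have hd : ∀ t ∈ T y k ∪ T y' k, t ∈ T d k → d t ∈ U y k t ∩ U y' k t := fun t ht htd =>
    hdU t <| Finset.mem_filter.2 ⟨ht, hdS t htd⟩
  have hy := dist_lt_add_of_mapsTo_pi_ball (hU y k) (hU d k) (hgU y k) (hgU d k)
    fun t ht htd => (hd t (Finset.mem_union_left _ ht) htd).1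
  have hy' := dist_lt_add_of_mapsTo_pi_ball (hU y' k) (hU d k) (hgU y' k) (hgU d k)
    fun t ht htd => (hd t (Finset.mem_union_right _ ht) htd).2
  linarith [dist_triangle_right (g y) (g y') (g d)]

theorem exists_countable_dependsOn_prod {K : Type*} [TopologicalSpace K] [SeparableSpace K]
    {f : K × (∀ t, X t) → E} (hf : Continuous f) :
    ∃ S : Set ι, S.Countable ∧ ∀ x, DependsOn (fun y => f (x, y)) S := by
  obtain ⟨Q, hQ, hQd⟩ := exists_countable_dense K
  choose S hS hdep using fun x : K => exists_countable_dependsOn (hf.comp (.prodMk_right x))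
  refine ⟨⋃ x ∈ Q, S x, hQ.biUnion fun x _ => hS x, fun x y y' hyy' => ?_⟩
  have heq : (fun x => f (x, y)) = fun x => f (x, y') :=
    Continuous.ext_on hQd (by fun_prop) (by fun_prop) fun q hq =>
      hdep q fun t ht => hyy' t (mem_biUnion hq ht)
  exact congrFun heq x

end CountablyManyCoordinates

section FunctionalClasses

variable {Z W : Type*} [TopologicalSpace Z] [TopologicalSpace W] {b : Bool} {α : Ordinal.{0}}

lemma FunClass.preimage {φ : W → Z} (hφ : Continuous φ) {C : Set Z} (hC : FunClass Z b α C) :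
    FunClass W b α (φ ⁻¹' C) := by
  induction hC with
  | open_ A h =>
    obtain ⟨f, hf, hA⟩ := h
    exact .open_ _ ⟨f ∘ φ, hf.comp hφ, by rw [← preimage_compl, hA, preimage_comp]⟩
  | closed_ A h =>
    obtain ⟨f, hf, rfl⟩ := h
    exact .closed_ _ ⟨f ∘ φ, hf.comp hφ, rfl⟩
  | union α A β hα hβ _ ih =>
    rw [preimage_iUnion]
    exact .union α _ β hα hβ ih
  | inter α A β hα hβ _ ih =>
    rw [preimage_iInter]
    exact .inter α _ β hα hβ ih

lemma FunctionallyClosed.of_isClopen {A : Set Z} (hA : IsClopen A) : FunctionallyClosed A := by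
  refine ⟨Aᶜ.indicator 1, hA.compl.continuous_indicator continuous_one, ?_⟩
  ext z
  by_cases hz : z ∈ A <;> simp [hz]

lemma FunClass.of_isClopen {A : Set Z} (hA : IsClopen A) (α : Ordinal.{0}) :
    FunClass Z false α A := by
  rcases eq_or_ne α 0 with rfl | hα
  · exact .closed_ _ (.of_isClopen hA)
  · rw [← iInter_const (ι := ℕ) A]
    exact .inter α _ (fun _ => 0) hα (fun _ => pos_iff_ne_zero.2 hα)
      fun _ => .open_ _ (.of_isClopen hA.compl)

lemma FunClass.exists_countable_continuous {C : Set Z} (hC : FunClass Z b α C) :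
    ∃ 𝓕 : Set C(Z, ℝ), 𝓕.Countable ∧ ∀ z z', (∀ f ∈ 𝓕, f z = f z') → (z ∈ C ↔ z' ∈ C) := by
  induction hC with
  | open_ A h =>
    obtain ⟨f, hf, hA⟩ := h
    refine ⟨{⟨f, hf⟩}, countable_singleton _, fun z z' hzz' => ?_⟩
    have hfz : f z = f z' := hzz' _ rfl
    rw [← not_iff_not, ← mem_compl_iff, ← mem_compl_iff, hA, mem_preimage, mem_preimage, hfz]
  | closed_ A h =>
    obtain ⟨f, hf, rfl⟩ := h
    refine ⟨{⟨f, hf⟩}, countable_singleton _, fun z z' hzz' => ?_⟩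
    have hfz : f z = f z' := hzz' _ rfl
    rw [mem_preimage, mem_preimage, hfz]
  | union _ A _ _ _ _ ih =>
    choose 𝓕 h𝓕 hA using ih
    refine ⟨⋃ n, 𝓕 n, countable_iUnion h𝓕, fun z z' hzz' => ?_⟩
    simp only [mem_iUnion]
    exact exists_congr fun n => hA n z z' fun f hf => hzz' f (mem_iUnion_of_mem n hf)
  | inter _ A _ _ _ _ ih =>
    choose 𝓕 h𝓕 hA using ih
    refine ⟨⋃ n, 𝓕 n, countable_iUnion h𝓕, fun z z' hzz' => ?_⟩
    simp only [mem_iInter]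
    exact forall_congr' fun n => hA n z z' fun f hf => hzz' f (mem_iUnion_of_mem n hf)

open TopologicalSpace in
theorem FunClass.exists_countable_dependsOn {K ι : Type*} {X : ι → Type*} [TopologicalSpace K]
    [SeparableSpace K] [∀ t, TopologicalSpace (X t)] [∀ t, SeparableSpace (X t)]
    {C : Set (K × ∀ t, X t)} (hC : FunClass (K × ∀ t, X t) b α C) :
    ∃ S : Set ι, S.Countable ∧ ∀ x, DependsOn (fun y => (x, y) ∈ C) S := by
  obtain ⟨𝓕, h𝓕, hC𝓕⟩ := hC.exists_countable_continuous
  choose S hS hdep using fun f : C(K × ∀ t, X t, ℝ) => exists_countable_dependsOn_prod f.continuous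
  exact ⟨⋃ f ∈ 𝓕, S f, h𝓕.biUnion fun f _ => hS f, fun x y y' hyy' => propext <|
    hC𝓕 _ _ fun f hf => hdep f x fun t ht => hyy' t (mem_biUnion hf ht)⟩

end FunctionalClasses

section UnionOfProducts

variable {K Y : Type*} [TopologicalSpace K] [TopologicalSpace Y] {A : Set K} {F G : Set Y}

lemma isClopen_val_preimage_prod (hF : IsClosed F) (hG : IsClosed G) (hFG : Disjoint F G) :
    IsClopen (((↑) : ↥(A ×ˢ F ∪ Aᶜ ×ˢ G) → K × Y) ⁻¹' (A ×ˢ F)) := by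
  have hsnd : Continuous fun p : ↥(A ×ˢ F ∪ Aᶜ ×ˢ G) => p.1.2 := by fun_prop
  have hdisj := disjoint_left.1 hFG
  constructor
  · convert hF.preimage hsnd using 1
    ext ⟨p, ⟨hpA, hpF⟩ | ⟨hpA, hpG⟩⟩
    · exact iff_of_true ⟨hpA, hpF⟩ hpF
    · exact iff_of_false (fun h => hpA h.1) fun h => hdisj h hpG
  · convert (hG.preimage hsnd).isOpen_compl using 1
    ext ⟨p, ⟨hpA, hpF⟩ | ⟨hpA, hpG⟩⟩
    · exact iff_of_true ⟨hpA, hpF⟩ (hdisj hpF)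
    · exact iff_of_false (fun h => hpA h.1) fun h => h hpG

theorem not_isAlphaEmbedded_prod_union_compl_prod {α : Ordinal.{0}} (hF : IsClosed F)
    (hG : IsClosed G) (hFG : Disjoint F G)
    (hsection : ∀ C : Set (K × Y), FunClass (K × Y) false α C →
      ∃ y ∈ F, ∃ y' ∈ G, ∀ x, (x, y) ∈ C ↔ (x, y') ∈ C)
    (hA : ¬ FunClass K false α A) : ¬ IsAlphaEmbedded α (A ×ˢ F ∪ Aᶜ ×ˢ G) := by
  intro hE
  obtain ⟨C, hC, hCE⟩ := hE (A ×ˢ F) subset_union_left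
    (.of_isClopen (isClopen_val_preimage_prod hF hG hFG) α)
  obtain ⟨y, hy, y', hy', hyy'⟩ := hsection C hC
  have hAC : A = (fun x => (x, y)) ⁻¹' C := by
    ext x
    refine ⟨fun hx => (hCE.ge ⟨hx, hy⟩).1, fun hx => by_contra fun hxA => ?_⟩
    exact hxA (hCE.le ⟨(hyy' x).1 hx, .inr ⟨hxA, hy'⟩⟩).1
  exact hA (hAC ▸ hC.preimage (.prodMk_left y))

end UnionOfProducts

section StoneSets

variable {ι N : Type*} {i j : N}

/-- Stone's set of the points of `N^ι` which take each value other than `i` at most once;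
`Fset i` is the case `N = {1, 2, …}`, `ι = (0,1]`. -/
def stoneSet (ι : Type*) {N : Type*} (i : N) : Set (ι → N) :=
  {y | ∀ n, n ≠ i → {t | y t = n}.Subsingleton}

lemma mem_stoneSet_iff_injOn {y : ι → N} : y ∈ stoneSet ι i ↔ InjOn y {t | y t ≠ i} :=
  ⟨fun h _ _ s hs hts => h (y s) hs hts rfl, fun h _ hn _ ht _ hs =>
    h (ht.trans_ne hn) (hs.trans_ne hn) (ht.trans hs.symm)⟩

lemma isClosed_stoneSet [TopologicalSpace N] [DiscreteTopology N] (i : N) :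
    IsClosed (stoneSet ι i) := by
  have : stoneSet ι i = ⋂ (t) (s) (_ : t ≠ s), {y | y t = y s → y t = i} := by
    ext y
    simp only [mem_stoneSet_iff_injOn, mem_iInter, InjOn, mem_ofPred_eq]
    grind
  rw [this]
  refine isClosed_iInter fun t => isClosed_iInter fun s => isClosed_iInter fun _ => ?_
  exact (isClosed_discrete {p : N × N | p.1 = p.2 → p.1 = i}).preimage
    (f := fun y : ι → N => (y t, y s)) (by fun_prop)

lemma disjoint_stoneSet [Uncountable ι] [Countable N] (hij : i ≠ j) :
    Disjoint (stoneSet ι i) (stoneSet ι j) := by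
  rw [disjoint_left]
  intro y hi hj
  have hinj : Function.Injective y := fun t s hts => by
    by_cases hs : y s = i
    · exact hj (y s) (hs.trans_ne hij) hts rfl
    · exact hi (y s) hs hts rfl
  exact not_countable hinj.countable

/-- Take the points constantly `i`, respectively `j`, off `S` and equal to one injection on `S`. -/
lemma exists_mem_stoneSet_eqOn [Infinite N] {S : Set ι} (hS : S.Countable) (i j : N) :
    ∃ y ∈ stoneSet ι i, ∃ y' ∈ stoneSet ι j, EqOn y y' S := by
  classical
  obtain ⟨f, hf⟩ := countable_iff_exists_injOn.1 hS
  let e : ι → N := Infinite.natEmbedding N ∘ f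
  have he : InjOn e S := (Infinite.natEmbedding N).injective.comp_injOn hf
  have hmem (k : N) : S.piecewise e (fun _ => k) ∈ stoneSet ι k := by
    have hsub : {t | S.piecewise e (fun _ => k) t ≠ k} ⊆ S := fun t ht => by
      contrapose! ht
      simp [ht]
    exact mem_stoneSet_iff_injOn.2 <| ((piecewise_eqOn S e _).injOn_iff.2 he).mono hsub
  exact ⟨_, hmem i, _, hmem j, (piecewise_eqOn S e _).trans (piecewise_eqOn S e _).symm⟩

end StoneSets

theorem statement16_general {K ι N : Type*} [TopologicalSpace K]
    [TopologicalSpace.SeparableSpace K] [Uncountable ι] [TopologicalSpace N] [DiscreteTopology N]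
    [Countable N] [Infinite N] {i j : N} (hij : i ≠ j) {α : Ordinal.{0}} {A : Set K}
    (hA : ¬ FunClass K false α A) :
    ¬ IsAlphaEmbedded α (A ×ˢ stoneSet ι i ∪ Aᶜ ×ˢ stoneSet ι j) := by
  refine not_isAlphaEmbedded_prod_union_compl_prod (isClosed_stoneSet i) (isClosed_stoneSet j)
    (disjoint_stoneSet hij) (fun C hC => ?_) hA
  obtain ⟨S, hS, hdep⟩ := hC.exists_countable_dependsOn
  obtain ⟨y, hy, y', hy', hyy'⟩ := exists_mem_stoneSet_eqOn hS i j
  exact ⟨y, hy, y', hy', fun x => iff_of_eq (hdep x hyy')⟩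

instance : Uncountable (Ioc (0 : ℝ) 1) :=
  not_countable_iff.1 fun h => zero_lt_one.not_ge (Cardinal.Real.Ioc_countable_iff.1 h)

instance : Infinite PosNat := inferInstanceAs (Infinite ℕ+)

/-- if `A₁ ⊆ [0,1]` is of the functionally additive class `α` but not of
the functionally multiplicative class `α` in `[0,1]`, and `A₂ = [0,1] ∖ A₁`, then
`E = (A₁ × F₁) ∪ (A₂ × F₂)` is not α-embedded in `X = [0,1] × ℕ^{(0,1]}`. -/
theorem statement16 (α : Ordinal.{0}) (hα : α < (Cardinal.aleph 1).ord)
    (A₁ : Set ↥(Set.Icc (0 : ℝ) 1))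
    (hadd : FunClass ↥(Set.Icc (0 : ℝ) 1) true α A₁)
    (hmul : ¬ FunClass ↥(Set.Icc (0 : ℝ) 1) false α A₁) :
    ¬ IsAlphaEmbedded α
      ({p : Xprod | p.1 ∈ A₁ ∧ p.2 ∈ Fset ⟨1, one_pos⟩} ∪
        {p : Xprod | p.1 ∈ A₁ᶜ ∧ p.2 ∈ Fset ⟨2, two_pos⟩}) :=
  statement16_general (ι := Ioc (0 : ℝ) 1) (by decide) hmul
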